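/- arXiv:1204.2445 — 2 statements merged into one kernel-verified Lean document; each statement's English description precedes it below -/
import Mathlib

section
/- A subset A of the real numbers is bounded if and only if every sequence of points in A has a slowly oscillating subsequence. -/
open Filter Topology

/-- A real sequence `x` is slowly oscillating if for every `ε > 0` there exist `δ > 0`
and a positive integer `N` such that `|x m - x n| < ε` whenever `N ≤ n`, `n ≤ m`, and
`m ≤ (1 + δ) * n`. -/
def SlowlyOscillating (x : ℕ → ℝ) : Prop :=
  ∀ ε : ℝ, 0 < ε → ∃ δ : ℝ, 0 < δ ∧ ∃ N : ℕ, 0 < N ∧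
    ∀ n m : ℕ, N ≤ n → n ≤ m → (m : ℝ) ≤ (1 + δ) * n → |x m - x n| < ε

/-- A convergent real sequence is slowly oscillating. -/
theorem SlowlyOscillating.of_tendsto {x : ℕ → ℝ} {a : ℝ} (h : Tendsto x atTop (𝓝 a)) :
    SlowlyOscillating x := by
  intro ε hε
  obtain ⟨N, hN⟩ := Metric.cauchySeq_iff.1 h.cauchySeq ε hε
  refine ⟨1, one_pos, N + 1, N.succ_pos, fun n m hn hm _ => ?_⟩
  simpa only [Real.dist_eq] using hN m (by omega) n (by omega)

/-- Consecutive terms of a slowly oscillating sequence become arbitrarily close. -/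
theorem SlowlyOscillating.exists_abs_succ_sub_lt {x : ℕ → ℝ} (h : SlowlyOscillating x)
    {ε : ℝ} (hε : 0 < ε) : ∃ n, |x (n + 1) - x n| < ε := by
  obtain ⟨δ, hδ, N, -, hN⟩ := h ε hε
  obtain ⟨M, hM⟩ := exists_nat_ge (1 / δ)
  refine ⟨max N M, hN _ _ (le_max_left _ _) (Nat.le_succ _) ?_⟩
  have hle : 1 / δ ≤ ((max N M : ℕ) : ℝ) :=
    hM.trans (Nat.cast_le.2 (le_max_right _ _))
  rw [div_le_iff₀ hδ] at hle
  rw [Nat.cast_succ]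
  linarith

/-- An unbounded set of reals contains a sequence whose absolute values grow by at least one
at each step. -/
theorem exists_seq_abs_add_one_le_of_not_isBounded {A : Set ℝ} (hA : ¬ Bornology.IsBounded A) :
    ∃ x : ℕ → ℝ, (∀ n, x n ∈ A) ∧ ∀ n, |x n| + 1 ≤ |x (n + 1)| := by
  have hlarge : ∀ r : ℝ, ∃ a ∈ A, r < |a| := by
    intro r
    by_contra! hr
    exact hA (isBounded_iff_forall_norm_le.2 ⟨r, hr⟩)
  choose f hfA hf using hlarge
  refine ⟨fun n => Nat.rec (f 0) (fun _ y => f (|y| + 1)) n, fun n => ?_, fun n => (hf _).le⟩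
  cases n <;> exact hfA _

/-- A subset `A` of `ℝ` is bounded iff every sequence of points in `A`
has a slowly oscillating subsequence. -/
theorem bounded_iff_slowlyOscillating_compact (A : Set ℝ) :
    Bornology.IsBounded A ↔
      ∀ x : ℕ → ℝ, (∀ n, x n ∈ A) →
        ∃ k : ℕ → ℕ, StrictMono k ∧ SlowlyOscillating (x ∘ k) := by
  constructor
  · intro hA x hx
    obtain ⟨a, -, k, hk, hlim⟩ := tendsto_subseq_of_bounded hA hx
    exact ⟨k, hk, .of_tendsto hlim⟩
  · intro h
    by_contra hA
    obtain ⟨x, hxA, hx⟩ := exists_seq_abs_add_one_le_of_not_isBounded hA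
    obtain ⟨k, hk, hosc⟩ := h x hxA
    obtain ⟨n, hn⟩ := hosc.exists_abs_succ_sub_lt one_pos
    have hmono : Monotone fun n => |x n| :=
      monotone_nat_of_le_succ fun n => by linarith [hx n]
    have hstep : |x (k n + 1)| ≤ |x (k (n + 1))| := hmono (hk n.lt_succ_self)
    have htri := abs_sub_abs_le_abs_sub (x (k (n + 1))) (x (k n))
    simp only [Function.comp_apply] at hn
    linarith [hx (k n)]
end

section
/- Let E be an interval of ℝ. A function f : E → ℝ is uniformly continuous on E if and only if there exists a positive integer p such that f preserves p-quasi-Cauchy sequences of points in E, i.e., (f(x_n)) is p-quasi-Cauchy whenever (x_n) is a p-quasi-Cauchy sequence of points in E. -/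
open Filter Topology

/-- A real sequence `x` is `p`-quasi-Cauchy if `x (n + p) - x n → 0`. -/
def PQuasiCauchy (p : ℕ) (x : ℕ → ℝ) : Prop :=
  Tendsto (fun n => x (n + p) - x n) atTop (𝓝 0)

/-- A function `f` is `p`-quasi-Cauchy continuous on `E` if it maps `p`-quasi-Cauchy
sequences of points in `E` to `p`-quasi-Cauchy sequences. -/
def PQuasiCauchyContinuousOn (p : ℕ) (f : ℝ → ℝ) (E : Set ℝ) : Prop :=
  ∀ x : ℕ → ℝ, (∀ n, x n ∈ E) → PQuasiCauchy p x → PQuasiCauchy p (fun n => f (x n))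

/-- One step of a walk visiting the pairs `(a k, b k)` in turn. In the state `(k, z)` the walk
sits at `z` and heads for `a k` with stride at most `1 / (k + 1)`; from `a k` it jumps to `b k`
and heads for the next pair. -/
noncomputable def walkStep (a b : ℕ → ℝ) (s : ℕ × ℝ) : ℕ × ℝ :=
  open Classical in
  if s.2 = a s.1 then (s.1 + 1, b s.1)
  else (s.1, max (s.2 - 1 / (s.1 + 1)) (min (a s.1) (s.2 + 1 / (s.1 + 1))))

lemma le_walkStep_fst (a b : ℕ → ℝ) (s : ℕ × ℝ) : s.1 ≤ (walkStep a b s).1 := by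
  unfold walkStep
  split_ifs <;> simp

lemma walkStep_snd_mem {a b : ℕ → ℝ} {E : Set ℝ} (hE : E.OrdConnected) (ha : ∀ k, a k ∈ E)
    (hb : ∀ k, b k ∈ E) {s : ℕ × ℝ} (hs : s.2 ∈ E) : (walkStep a b s).2 ∈ E := by
  have hpos : (0 : ℝ) < 1 / (s.1 + 1) := by positivity
  unfold walkStep
  split_ifs with h
  · exact hb _
  · refine hE.uIcc_subset hs (ha s.1) ?_
    rw [Set.mem_uIcc]
    grind

lemma abs_walkStep_snd_sub_le {a b : ℕ → ℝ} (hab : ∀ k : ℕ, |b k - a k| ≤ 1 / (k + 1))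
    (s : ℕ × ℝ) : |(walkStep a b s).2 - s.2| ≤ 1 / (s.1 + 1) := by
  have hpos : (0 : ℝ) < 1 / (s.1 + 1) := by positivity
  unfold walkStep
  split_ifs with h
  · simpa only [h] using hab s.1
  · rw [abs_le]
    grind

/-- From any state the walk reaches its current target. -/
lemma exists_walkStep_iterate_eq (a b : ℕ → ℝ) (k : ℕ) (z : ℝ) :
    ∃ j, (walkStep a b)^[j] (k, z) = (k, a k) := by
  have hpos : (0 : ℝ) < 1 / (k + 1) := by positivity
  obtain ⟨m, hm⟩ := exists_nat_ge (|a k - z| / (1 / (k + 1)))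
  rw [div_le_iff₀ hpos] at hm
  induction m generalizing z with
  | zero =>
    refine ⟨0, ?_⟩
    rw [Nat.cast_zero, zero_mul, abs_nonpos_iff, sub_eq_zero] at hm
    simp [hm]
  | succ m ih =>
    by_cases h : z = a k
    · exact ⟨0, by simp [h]⟩
    · obtain ⟨j, hj⟩ := ih (max (z - 1 / (k + 1)) (min (a k) (z + 1 / (k + 1)))) (by
        have hm0 : 0 ≤ (m : ℝ) * (1 / (k + 1)) := by positivity
        rw [Nat.cast_succ, add_mul, one_mul, abs_le] at hm
        rw [abs_le]
        grind)
      refine ⟨j + 1, ?_⟩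
      rw [Function.iterate_succ_apply, ← hj]
      simp [walkStep, h]

/-- Pairs of points of `E` at distances at most `1 / (k + 1)` all occur as consecutive terms,
arbitrarily late, of a single quasi-Cauchy sequence in `E`. -/
lemma exists_quasiCauchy_through_pairs {a b : ℕ → ℝ} {E : Set ℝ} (hE : E.OrdConnected)
    (ha : ∀ k, a k ∈ E) (hb : ∀ k, b k ∈ E) (hab : ∀ k : ℕ, |b k - a k| ≤ 1 / (k + 1)) :
    ∃ x : ℕ → ℝ, (∀ n, x n ∈ E) ∧ PQuasiCauchy 1 x ∧
      ∀ N, ∃ n ≥ N, ∃ k, x n = a k ∧ x (n + 1) = b k := by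
  let S : ℕ → ℕ × ℝ := fun n => (walkStep a b)^[n] (0, a 0)
  have hsucc (n : ℕ) : S (n + 1) = walkStep a b (S n) := Function.iterate_succ_apply' _ _ _
  have hmono : Monotone fun n => (S n).1 :=
    monotone_nat_of_le_succ fun n => by rw [hsucc]; exact le_walkStep_fst a b _
  have hvisit (k : ℕ) : ∃ n, S n = (k, a k) := by
    induction k with
    | zero => exact ⟨0, rfl⟩
    | succ k ih =>
      obtain ⟨n, hn⟩ := ih
      obtain ⟨j, hj⟩ := exists_walkStep_iterate_eq a b (k + 1) (b k)
      refine ⟨j + (n + 1), ?_⟩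
      have hnext : S (n + 1) = (k + 1, b k) := by rw [hsucc, hn]; simp [walkStep]
      rw [← hj, ← hnext]
      exact Function.iterate_add_apply _ _ _ _
  have htop : Tendsto (fun n => (S n).1) atTop atTop :=
    tendsto_atTop_atTop_of_monotone hmono fun k => (hvisit k).imp fun n hn => by simp [hn]
  refine ⟨fun n => (S n).2, fun n => ?_, ?_, fun N => ?_⟩
  · induction n with
    | zero => exact ha 0
    | succ n ih => simpa only [hsucc] using walkStep_snd_mem hE ha hb ih
  · refine squeeze_zero_norm (fun n => ?_)
      ((tendsto_one_div_add_atTop_nhds_zero_nat (𝕜 := ℝ)).comp htop)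
    beta_reduce
    rw [hsucc]
    exact abs_walkStep_snd_sub_le hab (S n)
  · obtain ⟨n, hn⟩ := hvisit ((S N).1 + 1)
    refine ⟨n, ?_, (S N).1 + 1, by simp [hn], by simp [hsucc, hn, walkStep]⟩
    by_contra! hlt
    have := hmono hlt.le
    simp [hn] at this

lemma UniformContinuousOn.pQuasiCauchyContinuousOn {f : ℝ → ℝ} {E : Set ℝ}
    (hf : UniformContinuousOn f E) (p : ℕ) : PQuasiCauchyContinuousOn p f E := by
  intro x hx hq
  rw [Metric.uniformContinuousOn_iff] at hf
  rw [PQuasiCauchy, Metric.tendsto_atTop] at hq ⊢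
  intro ε hε
  obtain ⟨δ, hδ, hfδ⟩ := hf ε hε
  refine (hq δ hδ).imp fun N hN n hn => ?_
  simpa [Real.dist_eq] using hfδ _ (hx (n + p)) _ (hx n) (by simpa [Real.dist_eq] using hN n hn)

lemma PQuasiCauchyContinuousOn.one {p : ℕ} (hp : 0 < p) {f : ℝ → ℝ} {E : Set ℝ}
    (hf : PQuasiCauchyContinuousOn p f E) : PQuasiCauchyContinuousOn 1 f E := by
  intro x hx hq
  have hdiv := hf (fun n => x (n / p)) (fun n => hx _) (by
    simpa [PQuasiCauchy, Function.comp_def, Nat.add_div_right _ hp] using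
      Tendsto.comp hq (Nat.tendsto_div_const_atTop hp.ne'))
  have hmul : Tendsto (fun n : ℕ => n * p) atTop atTop := tendsto_id.atTop_mul_const' hp
  simpa [PQuasiCauchy, Function.comp_def, Nat.add_div_right _ hp, Nat.mul_div_cancel _ hp] using
    Tendsto.comp hdiv hmul

lemma PQuasiCauchyContinuousOn.uniformContinuousOn {f : ℝ → ℝ} {E : Set ℝ}
    (hE : E.OrdConnected) (hf : PQuasiCauchyContinuousOn 1 f E) : UniformContinuousOn f E := by
  rw [Metric.uniformContinuousOn_iff]
  by_contra! ⟨ε, hε, h⟩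
  choose a ha b hb hab hfab using fun k : ℕ => h (1 / (k + 1)) (by positivity)
  obtain ⟨x, hx, hq, hpair⟩ := exists_quasiCauchy_through_pairs hE ha hb fun k => by
    rw [abs_sub_comm, ← Real.dist_eq]; exact (hab k).le
  obtain ⟨N, hN⟩ := Metric.tendsto_atTop.1 (hf x hx hq) ε hε
  obtain ⟨n, hn, k, hnk, hnk'⟩ := hpair N
  have hlt := hN n hn
  simp only [hnk, hnk', Real.dist_eq, sub_zero] at hlt
  rw [abs_sub_comm, ← Real.dist_eq] at hlt
  exact (hfab k).not_gt hlt

/-- On an interval (nonempty convex subset) `E` of `ℝ`, a function `f`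
is uniformly continuous iff there is a positive integer `p` such that `f` preserves
`p`-quasi-Cauchy sequences of points in `E`. -/
theorem uniformContinuousOn_iff_exists_pQuasiCauchyContinuous
    (E : Set ℝ) (hne : E.Nonempty) (hconv : Convex ℝ E) (f : ℝ → ℝ) :
    UniformContinuousOn f E ↔
      ∃ p : ℕ, 0 < p ∧ PQuasiCauchyContinuousOn p f E :=
  ⟨fun hf => ⟨1, one_pos, hf.pQuasiCauchyContinuousOn 1⟩,
    fun ⟨_, hp, hf⟩ => (hf.one hp).uniformContinuousOn hconv.ordConnected⟩
end
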